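/- Let σ₁ and σ₂ be convex subsets of ℝⁿ and let τ be a nonempty convex extreme subset (face) of σ₁ ∩ σ₂. Then there exist convex extreme subsets τ₁ of σ₁ and τ₂ of σ₂ such that τ = τ₁ ∩ τ₂. (This is Remark 7.3 of the paper: every face of the intersection of two cones of two fans is an intersection of a face of the first with a face of the second.) -/

import Mathlib

/-! For a convex set `σ` and a convex `τ ⊆ σ`, the smallest face of `σ` containing `τ` consists of
the points `p ∈ σ` such that the segment from `p` to some `c ∈ τ` can be prolonged beyond `c`
inside `σ`. Take `τ₁`, `τ₂` to be these faces of `σ₁`, `σ₂`. If `p` lies in both, it comes with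
witnesses `c₁, c₂ ∈ τ`, which may be different; but their midpoint `m ∈ τ` is a witness for both
sets (`prolong_midpoint`). After shortening the two prolongations to a common length, `m` is
interior to a segment of `σ₁ ∩ σ₂` with endpoint `p`, so `p ∈ τ` because `τ` is extreme. -/

/-- The face of `σ` generated by `τ`: the points `p ∈ σ` from which a segment to some `c ∈ τ` can be
prolonged beyond `c` within `σ`. -/
def generatedFace {E : Type*} [AddCommGroup E] [Module ℝ E] (σ τ : Set E) : Set E :=
  {p | p ∈ σ ∧ ∃ c ∈ τ, ∃ ε : ℝ, 0 < ε ∧ c + ε • (c - p) ∈ σ}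

section GeneratedFace

variable {E : Type*} [AddCommGroup E] [Module ℝ E] {σ τ : Set E}

theorem prolong_mono (h : Convex ℝ σ) {c p : E} (hc : c ∈ σ) {ε δ : ℝ} (hδ : 0 < δ)
    (hδε : δ ≤ ε) (hq : c + ε • (c - p) ∈ σ) : c + δ • (c - p) ∈ σ := by
  have hε : 0 < ε := hδ.trans_le hδε
  have key := h hc hq (sub_nonneg.2 ((div_le_one hε).2 hδε)) (by positivity : 0 ≤ δ / ε)
    (by ring)
  convert key using 1
  match_scalars <;> field_simp <;> ring

theorem convex_generatedFace (h : Convex ℝ σ) (hτ : Convex ℝ τ) (hsub : τ ⊆ σ) :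
    Convex ℝ (generatedFace σ τ) := by
  rintro p ⟨hp, c, hc, ε, hε, hq⟩ p' ⟨hp', c', hc', ε', hε', hq'⟩ a b ha hb hab
  refine ⟨h hp hp' ha hb hab, a • c + b • c', hτ hc hc' ha hb hab, min ε ε', lt_min hε hε', ?_⟩
  have key := h (prolong_mono h (hsub hc) (lt_min hε hε') (min_le_left _ _) hq)
    (prolong_mono h (hsub hc') (lt_min hε hε') (min_le_right _ _) hq') ha hb hab
  convert key using 1
  module

theorem isExtreme_generatedFace (h : Convex ℝ σ) : IsExtreme ℝ σ (generatedFace σ τ) := by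
  refine ⟨fun p hp => hp.1, ?_⟩
  rintro x hx y hy z ⟨-, c, hc, ε, hε, hq⟩ ⟨a, b, ha, hb, hab, rfl⟩
  -- This length makes the prolonged point a convex combination of the old one and `y`.
  refine ⟨hx, c, hc, ε * a / (1 + ε * b), by positivity, ?_⟩
  have key := h hq hy (by positivity : 0 ≤ 1 / (1 + ε * b))
    (by positivity : 0 ≤ ε * b / (1 + ε * b)) (by field_simp)
  convert key using 1
  obtain rfl : a = 1 - b := by linarith
  have hne : 1 + ε * b ≠ 0 := by positivity
  match_scalars <;> field_simp <;> ring

theorem subset_generatedFace (hsub : τ ⊆ σ) : τ ⊆ generatedFace σ τ :=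
  fun c hc => ⟨hsub hc, c, hc, 1, one_pos, by simpa using hsub hc⟩

/-- If a segment from `p` can be prolonged beyond `c` in `σ`, then so can the segment from `p` to
the midpoint of `c` and any other `d ∈ σ`. -/
theorem prolong_midpoint (h : Convex ℝ σ) {c d p : E} (hd : d ∈ σ) {ε : ℝ} (hε : 0 < ε)
    (hq : c + ε • (c - p) ∈ σ) :
    ∃ δ : ℝ, 0 < δ ∧ ((1 / 2 : ℝ) • c + (1 / 2 : ℝ) • d) +
      δ • (((1 / 2 : ℝ) • c + (1 / 2 : ℝ) • d) - p) ∈ σ := by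
  refine ⟨ε / (2 + ε), by positivity, ?_⟩
  have key := h hq hd (by positivity : 0 ≤ 1 / (2 + ε))
    (by positivity : 0 ≤ (1 + ε) / (2 + ε)) (by field_simp; ring)
  convert key using 1
  match_scalars <;> field_simp <;> ring

end GeneratedFace


/-- Remark 7.3: every nonempty convex face (extreme subset) `τ` of the intersection of two
convex sets `σ₁, σ₂ ⊆ ℝⁿ` is the intersection `τ₁ ∩ τ₂` of a convex face `τ₁` of `σ₁` with
a convex face `τ₂` of `σ₂`. -/
theorem face_of_inter_eq_inter_faces (n : ℕ)
    (σ₁ σ₂ τ : Set (Fin n → ℝ))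
    (h₁ : Convex ℝ σ₁) (h₂ : Convex ℝ σ₂)
    (hτconv : Convex ℝ τ) (hτ : IsExtreme ℝ (σ₁ ∩ σ₂) τ) (hne : τ.Nonempty) :
    ∃ τ₁ τ₂ : Set (Fin n → ℝ),
      Convex ℝ τ₁ ∧ Convex ℝ τ₂ ∧
      IsExtreme ℝ σ₁ τ₁ ∧ IsExtreme ℝ σ₂ τ₂ ∧ τ = τ₁ ∩ τ₂ := by
  have hs₁ : τ ⊆ σ₁ := fun x hx => (hτ.subset hx).1
  have hs₂ : τ ⊆ σ₂ := fun x hx => (hτ.subset hx).2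
  refine ⟨generatedFace σ₁ τ, generatedFace σ₂ τ, convex_generatedFace h₁ hτconv hs₁,
    convex_generatedFace h₂ hτconv hs₂, isExtreme_generatedFace h₁, isExtreme_generatedFace h₂,
    Set.Subset.antisymm
      (Set.subset_inter (subset_generatedFace hs₁) (subset_generatedFace hs₂)) ?_⟩
  rintro p ⟨⟨hp₁, c, hc, ε, hε, hq⟩, ⟨hp₂, d, hd, ε', hε', hq'⟩⟩
  obtain ⟨δ, hδ, hr⟩ := prolong_midpoint h₁ (hs₁ hd) hε hq
  obtain ⟨δ', hδ', hr'⟩ := prolong_midpoint h₂ (hs₂ hc) hε' hq'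
  rw [add_comm ((1 / 2 : ℝ) • d)] at hr'
  have hm : (1 / 2 : ℝ) • c + (1 / 2 : ℝ) • d ∈ τ :=
    hτconv hc hd (by norm_num) (by norm_num) (by norm_num)
  generalize (1 / 2 : ℝ) • c + (1 / 2 : ℝ) • d = m at hm hr hr'
  have hη : 0 < min δ δ' := lt_min hδ hδ'
  have e₁ := prolong_mono h₁ (hs₁ hm) hη (min_le_left _ _) hr
  have e₂ := prolong_mono h₂ (hs₂ hm) hη (min_le_right _ _) hr'
  generalize min δ δ' = η at hη e₁ e₂
  refine hτ.left_mem_of_mem_openSegment ⟨hp₁, hp₂⟩ ⟨e₁, e₂⟩ hm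
    ⟨η / (1 + η), 1 / (1 + η), by positivity, by positivity, by field_simp; ring, ?_⟩
  match_scalars <;> field_simp <;> ring
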